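/- Let s₁, s₂ ∈ ℝ^{4,2} be lightlike with ⟨s₁,p⟩ = ⟨s₂,p⟩ = 1 and ⟨s₁,s₂⟩ = −1, and let m be lightlike with ⟨m,s₁⟩ = ⟨m,s₂⟩ = ⟨m,p⟩ = 0 (a point of the circle in which the spheres s₁ and s₂ intersect orthogonally). Then U := span{s₁ + p, s₂ + p, m} is 3-dimensional, the bilinear form restricted to U is positive semidefinite of rank 2 with radical equal to span{m}; consequently, the set of lightlike vectors in the orthogonal complement U^⊥, together with 0, is the union of exactly two distinct 2-dimensional totally isotropic subspaces of ℝ^{4,2}, each of which contains m. (Fact: the spheres orthogonally intersecting a circle at a fixed point m lie in exactly two contact elements through m, which coincide up to orientation.) -/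

import Mathlib

/-!
Put `a₁ = s₁ + p`, `a₂ = s₂ + p`. The hypotheses say exactly that `a₁, a₂, p, m` are mutually
orthogonal with squares `1, 1, -1, 0`; hence the claims on `U = span {a₁, a₂, m}` are immediate from
`⟨x a₁ + y a₂ + z m, x a₁ + y a₂ + z m⟩ = x² + y²`.

The four vectors have an orthogonal complement of dimension at least two, so it contains a vector
outside `span {m}`. The signature `(4,2)` forces that vector to be spacelike
(`bform_pos_of_orthogonal`: otherwise `p`, `m` and it would span a negative semidefinite 3-space),
and normalizing gives a unit vector `e` (`exists_unit`). Moreover `U^⊥ = span {p, m, e}`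
(`orthogonal_decomp`): a further independent vector would again be spacelike, and together with
`a₁, a₂, e, m` it would span a positive semidefinite 5-space (`no_five_semidefinite`).
On `U^⊥` the form is `⟨α p + γ e + k m, α p + γ e + k m⟩ = γ² - α²`, whose zero set is the union of
the planes `span {m, p + e}` and `span {m, p - e}`.
-/

noncomputable section

/-- The vector space ℝ^{4,2}, modeled as `Fin 6 → ℝ`. -/
abbrev R42 : Type := Fin 6 → ℝ

/-- The symmetric bilinear form of signature (4,2) on ℝ^{4,2}. -/
def bform : R42 →ₗ[ℝ] R42 →ₗ[ℝ] ℝ :=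
  LinearMap.mk₂ ℝ
    (fun x y => x 0 * y 0 + x 1 * y 1 + x 2 * y 2 + x 3 * y 3 - x 4 * y 4 - x 5 * y 5)
    (fun x x' y => by simp only [Pi.add_apply]; ring)
    (fun c x y => by simp only [Pi.smul_apply, smul_eq_mul]; ring)
    (fun x y y' => by simp only [Pi.add_apply]; ring)
    (fun c x y => by simp only [Pi.smul_apply, smul_eq_mul]; ring)

/-- A lightlike vector: nonzero and isotropic. Represents an oriented 2-sphere. -/
def IsLightlike (v : R42) : Prop := v ≠ 0 ∧ bform v v = 0

/-- The Lie inversion with respect to the linear sphere complex determined by `a`. -/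
def lieInv (a r : R42) : R42 := r - (2 * bform r a / bform a a) • a

theorem bform_apply (x y : R42) : bform x y =
    x 0 * y 0 + x 1 * y 1 + x 2 * y 2 + x 3 * y 3 - x 4 * y 4 - x 5 * y 5 := rfl

theorem bform_comm (x y : R42) : bform x y = bform y x := by
  simp only [bform_apply]; ring

/-- A vector orthogonal to a unit timelike `p` and a null `m ⟂ p`, but not a multiple of `m`, is
spacelike: the form has only two negative directions, so it has no negative semidefinite
3-dimensional subspace. -/
theorem bform_pos_of_orthogonal {p m v : R42} (hp : bform p p = -1) (hm : IsLightlike m)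
    (hmp : bform m p = 0) (hvp : bform v p = 0) (hvm : bform v m = 0)
    (hv : v ∉ Submodule.span ℝ ({m} : Set R42)) : 0 < bform v v := by
  by_contra! hneg
  -- a nontrivial combination of `p, m, v` whose two timelike coordinates vanish
  let T : (Fin 3 → ℝ) →ₗ[ℝ] (Fin 2 → ℝ) :=
    Matrix.toLin' !![p 4, m 4, v 4; p 5, m 5, v 5]
  obtain ⟨c, hc, hc0⟩ := (Submodule.ne_bot_iff _).1
    (LinearMap.ker_ne_bot_of_finrank_lt (f := T) (by simp))
  set w : R42 := c 0 • p + c 1 • m + c 2 • v with hw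
  have hT : T c = 0 := hc
  have h4 : w 4 = 0 := by
    have := congrFun hT 0
    simp [T, Matrix.mulVec, dotProduct, Fin.sum_univ_succ] at this
    simp [hw]; linarith
  have h5 : w 5 = 0 := by
    have := congrFun hT 1
    simp [T, Matrix.mulVec, dotProduct, Fin.sum_univ_succ] at this
    simp [hw]; linarith
  have hww : bform w w = -(c 0) ^ 2 + (c 2) ^ 2 * bform v v := by
    simp only [hw, map_add, map_smul, LinearMap.add_apply, LinearMap.smul_apply, smul_eq_mul,
      hp, hm.2, hmp, hvp, hvm, bform_comm p m, bform_comm p v, bform_comm m v]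
    ring
  have hww' := bform_apply w w
  rw [h4, h5, hww] at hww'
  have hle : (c 2) ^ 2 * bform v v ≤ 0 := mul_nonpos_of_nonneg_of_nonpos (sq_nonneg _) hneg
  have h0 : w = 0 := by
    funext i
    fin_cases i <;> simp only [Pi.zero_apply] <;> first | exact h4 | exact h5 | skip
    all_goals
      refine pow_eq_zero_iff (two_ne_zero) |>.1 ?_
      simp
      nlinarith [sq_nonneg (w 0), sq_nonneg (w 1), sq_nonneg (w 2), sq_nonneg (w 3),
        sq_nonneg (c 0)]
  have hc0' : c 0 = 0 := by
    have : bform w p = 0 := by simp [h0]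
    simp only [hw, map_add, map_smul, LinearMap.add_apply, LinearMap.smul_apply, smul_eq_mul,
      hp, hmp, hvp] at this
    linarith
  have hmv : c 1 • m + c 2 • v = 0 := by simpa [hw, hc0'] using h0
  by_cases hc2 : c 2 = 0
  · have : c 1 = 0 := by simpa [hc2, hm.1] using hmv
    apply hc0
    funext i
    fin_cases i <;> simpa
  · apply hv
    rw [Submodule.mem_span_singleton]
    refine ⟨-(c 1 / c 2), ?_⟩
    have : c 2 • v = -(c 1 • m) := by rw [eq_neg_iff_add_eq_zero, add_comm]; exact hmv
    rw [neg_smul, div_eq_inv_mul, mul_smul, ← smul_neg, ← this, smul_smul, inv_mul_cancel₀ hc2,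
      one_smul]

/-- The form has only four positive directions, so there is no positive semidefinite
5-dimensional subspace. -/
theorem no_five_semidefinite {a b e v m : R42} (ha : bform a a = 1) (hb : bform b b = 1)
    (he : bform e e = 1) (hv : 0 < bform v v) (hm : IsLightlike m)
    (hba : bform b a = 0) (hea : bform e a = 0) (hva : bform v a = 0) (hma : bform m a = 0)
    (heb : bform e b = 0) (hvb : bform v b = 0) (hmb : bform m b = 0)
    (hve : bform v e = 0) (hme : bform m e = 0) (hmv : bform m v = 0) : False := by
  -- a nontrivial combination whose four spacelike coordinates vanish
  let T : (Fin 5 → ℝ) →ₗ[ℝ] (Fin 4 → ℝ) :=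
    Matrix.toLin' !![a 0, b 0, e 0, v 0, m 0; a 1, b 1, e 1, v 1, m 1;
      a 2, b 2, e 2, v 2, m 2; a 3, b 3, e 3, v 3, m 3]
  obtain ⟨c, hc, hc0⟩ := (Submodule.ne_bot_iff _).1
    (LinearMap.ker_ne_bot_of_finrank_lt (f := T) (by simp))
  set w : R42 := c 0 • a + c 1 • b + c 2 • e + c 3 • v + c 4 • m with hw
  have hT : T c = 0 := hc
  have h0 : w 0 = 0 := by
    have := congrFun hT 0
    simp [T, Matrix.mulVec, dotProduct, Fin.sum_univ_succ] at this
    simp [hw]; linarith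
  have h1 : w 1 = 0 := by
    have := congrFun hT 1
    simp [T, Matrix.mulVec, dotProduct, Fin.sum_univ_succ] at this
    simp [hw]; linarith
  have h2 : w 2 = 0 := by
    have := congrFun hT 2
    simp [T, Matrix.mulVec, dotProduct, Fin.sum_univ_succ] at this
    simp [hw]; linarith
  have h3 : w 3 = 0 := by
    have := congrFun hT 3
    simp [T, Matrix.mulVec, dotProduct, Fin.sum_univ_succ] at this
    simp [hw]; linarith
  have hww : bform w w = (c 0) ^ 2 + (c 1) ^ 2 + (c 2) ^ 2 + (c 3) ^ 2 * bform v v := by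
    simp only [hw, map_add, map_smul, LinearMap.add_apply, LinearMap.smul_apply, smul_eq_mul,
      ha, hb, he, hm.2, hba, hea, hva, hma, heb, hvb, hmb, hve, hme, hmv, bform_comm a b,
      bform_comm a e, bform_comm a v, bform_comm a m, bform_comm b e, bform_comm b v,
      bform_comm b m, bform_comm e v, bform_comm e m, bform_comm v m]
    ring
  have hww' := bform_apply w w
  rw [h0, h1, h2, h3, hww] at hww'
  have hle : 0 ≤ (c 3) ^ 2 * bform v v := mul_nonneg (sq_nonneg _) hv.le
  have s0 := sq_nonneg (c 0)
  have s1 := sq_nonneg (c 1)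
  have s2 := sq_nonneg (c 2)
  have t4 := sq_nonneg (w 4)
  have t5 := sq_nonneg (w 5)
  have c0 : c 0 = 0 := (pow_eq_zero_iff two_ne_zero).1 (by linarith)
  have c1 : c 1 = 0 := (pow_eq_zero_iff two_ne_zero).1 (by linarith)
  have c2 : c 2 = 0 := (pow_eq_zero_iff two_ne_zero).1 (by linarith)
  have w4 : w 4 = 0 := (pow_eq_zero_iff two_ne_zero).1 (by linarith)
  have w5 : w 5 = 0 := (pow_eq_zero_iff two_ne_zero).1 (by linarith)
  have c3 : c 3 = 0 := by
    have : (c 3) ^ 2 * bform v v = 0 := by linarith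
    simpa [hv.ne'] using this
  have hw0 : w = 0 := by
    funext i
    fin_cases i <;> assumption
  have c4 : c 4 = 0 := by simpa [hw, c0, c1, c2, c3, hm.1] using hw0
  apply hc0
  funext i
  fin_cases i <;> assumption

/-- Four linear conditions in dimension six leave room for a vector outside the line `span {m}`;
it is spacelike, so it can be normalized. -/
theorem exists_unit {a b p m : R42} (hp : bform p p = -1) (hm : IsLightlike m)
    (hmp : bform m p = 0) : ∃ e : R42, bform e e = 1 ∧ bform e p = 0 ∧ bform e m = 0 ∧
      bform e a = 0 ∧ bform e b = 0 := by
  let T : R42 →ₗ[ℝ] (Fin 4 → ℝ) := LinearMap.pi ![bform p, bform m, bform a, bform b]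
  have hker : 2 ≤ Module.finrank ℝ (LinearMap.ker T) := by
    have h1 := LinearMap.finrank_range_add_finrank_ker T
    have h2 := Submodule.finrank_le (LinearMap.range T)
    simp at h1 h2
    omega
  obtain ⟨v, hvT, hv⟩ : ∃ v ∈ LinearMap.ker T, v ∉ Submodule.span ℝ ({m} : Set R42) := by
    by_contra! h
    have := Submodule.finrank_mono (show LinearMap.ker T ≤ Submodule.span ℝ {m} from h)
    rw [finrank_span_singleton hm.1] at this
    omega
  have hvT' : T v = 0 := hvT
  have vp : bform v p = 0 := by rw [bform_comm]; exact congrFun hvT' 0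
  have vm : bform v m = 0 := by rw [bform_comm]; exact congrFun hvT' 1
  have va : bform v a = 0 := by rw [bform_comm]; exact congrFun hvT' 2
  have vb : bform v b = 0 := by rw [bform_comm]; exact congrFun hvT' 3
  have hpos := bform_pos_of_orthogonal hp hm hmp vp vm hv
  refine ⟨(Real.sqrt (bform v v))⁻¹ • v, ?_, ?_, ?_, ?_, ?_⟩
  · simp only [map_smul, LinearMap.smul_apply, smul_eq_mul]
    have hs := Real.mul_self_sqrt hpos.le
    have hs0 : Real.sqrt (bform v v) ≠ 0 := (Real.sqrt_pos.2 hpos).ne'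
    field_simp
    nlinarith
  all_goals simp [vp, vm, va, vb]

/-- A vector orthogonal to `a`, `b`, `m` differs from its projection to the Lorentzian plane
`span {p, e}` by a multiple of `m`. -/
theorem orthogonal_decomp {a b p m e v : R42} (ha : bform a a = 1) (hb : bform b b = 1)
    (hba : bform b a = 0) (hp : bform p p = -1) (hm : IsLightlike m) (hmp : bform m p = 0)
    (hma : bform m a = 0) (hmb : bform m b = 0) (hpa : bform p a = 0) (hpb : bform p b = 0)
    (he : bform e e = 1) (hep : bform e p = 0) (hem : bform e m = 0)
    (hea : bform e a = 0) (heb : bform e b = 0)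
    (hva : bform v a = 0) (hvb : bform v b = 0) (hvm : bform v m = 0) :
    ∃ k : ℝ, v = k • m - bform v p • p + bform v e • e := by
  set u : R42 := v + bform v p • p - bform v e • e with hu
  have hpe : bform p e = 0 := by rw [bform_comm, hep]
  have hpm : bform p m = 0 := by rw [bform_comm, hmp]
  have hme : bform m e = 0 := by rw [bform_comm, hem]
  have up : bform u p = 0 := by simp [hu, hp, hep]
  have um : bform u m = 0 := by simp [hu, hvm, hpm, hem]
  have ua : bform u a = 0 := by simp [hu, hva, hpa, hea]
  have ub : bform u b = 0 := by simp [hu, hvb, hpb, heb]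
  have ue : bform u e = 0 := by simp [hu, hpe, he]
  by_cases h : u ∈ Submodule.span ℝ ({m} : Set R42)
  · obtain ⟨k, hk⟩ := Submodule.mem_span_singleton.1 h
    refine ⟨k, ?_⟩
    rw [hk, hu]
    abel
  · exact (no_five_semidefinite ha hb he (bform_pos_of_orthogonal hp hm hmp up um h) hm hba hea ua
      hma heb ub hmb ue hme (by rw [bform_comm, um])).elim

/-- The span of a null vector `m` and a null vector `q ⟂ m` is a contact element, provided some `p`
separates `q` from `m`. -/
theorem contact_span {m q p : R42} (hm : IsLightlike m) (hq : bform q q = 0)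
    (hqm : bform q m = 0) (hmp : bform m p = 0) (hqp : bform q p ≠ 0) :
    Module.finrank ℝ (Submodule.span ℝ ({m, q} : Set R42)) = 2 ∧
      ∀ u ∈ Submodule.span ℝ ({m, q} : Set R42), ∀ v ∈ Submodule.span ℝ ({m, q} : Set R42),
        bform u v = 0 := by
  constructor
  · have hli : LinearIndependent ℝ ![m, q] := by
      rw [LinearIndependent.pair_iff]
      intro s t h
      have ht : t = 0 := by
        have := congrArg (fun x => bform x p) h
        simpa [hmp, hqp] using this
      subst ht
      simpa [hm.1] using h
    have := finrank_span_eq_card hli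
    rw [Matrix.range_cons_cons_empty] at this
    simpa using this
  · intro u hu v hv
    obtain ⟨x, y, rfl⟩ := Submodule.mem_span_pair.1 hu
    obtain ⟨z, t, rfl⟩ := Submodule.mem_span_pair.1 hv
    simp [hm.2, hq, hqm, bform_comm m q]

/-- The spheres orthogonally intersecting a circle at a fixed point `m`
lie in exactly two contact elements through `m`: the subspace
`U = span {s₁ + p, s₂ + p, m}` is 3-dimensional, the form restricted to `U` is positive
semidefinite of rank 2 with radical `span {m}`, and the lightlike vectors in `U^⊥`
(together with `0`) form the union of exactly two distinct 2-dimensional totally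
isotropic subspaces, each containing `m`. -/
theorem stmt_1 (p s₁ s₂ m : R42)
    (hp : bform p p = -1)
    (hs₁ : IsLightlike s₁) (hs₂ : IsLightlike s₂) (hm : IsLightlike m)
    (hs₁p : bform s₁ p = 1) (hs₂p : bform s₂ p = 1) (hs₁s₂ : bform s₁ s₂ = -1)
    (hms₁ : bform m s₁ = 0) (hms₂ : bform m s₂ = 0) (hmp : bform m p = 0)
    (U : Submodule ℝ R42)
    (hU : U = Submodule.span ℝ ({s₁ + p, s₂ + p, m} : Set R42)) :
    Module.finrank ℝ U = 3 ∧
    (∀ u ∈ U, 0 ≤ bform u u) ∧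
    (∀ u ∈ U, ((∀ v ∈ U, bform u v = 0) ↔ u ∈ Submodule.span ℝ ({m} : Set R42))) ∧
    ∃ f₁ f₂ : Submodule ℝ R42, f₁ ≠ f₂ ∧
      (Module.finrank ℝ f₁ = 2 ∧ ∀ u ∈ f₁, ∀ v ∈ f₁, bform u v = 0) ∧
      (Module.finrank ℝ f₂ = 2 ∧ ∀ u ∈ f₂, ∀ v ∈ f₂, bform u v = 0) ∧
      m ∈ f₁ ∧ m ∈ f₂ ∧
      {v : R42 | IsLightlike v ∧ ∀ u ∈ U, bform v u = 0} ∪ {0} =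
        (f₁ : Set R42) ∪ (f₂ : Set R42) := by
  subst hU
  set a := s₁ + p with ha_def
  set b := s₂ + p with hb_def
  have ha : bform a a = 1 := by
    simp [ha_def, hs₁.2, hs₁p, bform_comm p s₁, hp]
  have hb : bform b b = 1 := by
    simp [hb_def, hs₂.2, hs₂p, bform_comm p s₂, hp]
  have hba : bform b a = 0 := by
    simp [ha_def, hb_def, bform_comm s₂ s₁, hs₁s₂, hs₂p, bform_comm p s₁, hs₁p, hp]
  have hma : bform m a = 0 := by simp [ha_def, hms₁, hmp]
  have hmb : bform m b = 0 := by simp [hb_def, hms₂, hmp]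
  have hpa : bform p a = 0 := by simp [ha_def, bform_comm p s₁, hs₁p, hp]
  have hpb : bform p b = 0 := by simp [hb_def, bform_comm p s₂, hs₂p, hp]
  have hab : bform a b = 0 := by rw [bform_comm, hba]
  have ham : bform a m = 0 := by rw [bform_comm, hma]
  have hbm : bform b m = 0 := by rw [bform_comm, hmb]
  have hpm : bform p m = 0 := by rw [bform_comm, hmp]
  clear_value a b
  have haU : a ∈ Submodule.span ℝ ({a, b, m} : Set R42) := Submodule.subset_span (by simp)
  have hbU : b ∈ Submodule.span ℝ ({a, b, m} : Set R42) := Submodule.subset_span (by simp)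
  have hmU : m ∈ Submodule.span ℝ ({a, b, m} : Set R42) := Submodule.subset_span (by simp)
  refine ⟨?_, ?_, ?_, ?_⟩
  · have hli : LinearIndependent ℝ ![a, b, m] := by
      rw [Fintype.linearIndependent_iff]
      intro g hg
      simp only [Fin.sum_univ_three, Matrix.cons_val_zero, Matrix.cons_val_one,
        Matrix.cons_val] at hg
      have g0 : g 0 = 0 := by
        have := congrArg (fun x => bform x a) hg
        simpa [ha, hba, hma] using this
      have g1 : g 1 = 0 := by
        have := congrArg (fun x => bform x b) hg
        simpa [hb, hab, hmb] using this
      have g2 : g 2 = 0 := by simpa [g0, g1, hm.1] using hg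
      intro i
      fin_cases i <;> assumption
    have := finrank_span_eq_card hli
    have hr : Set.range ![a, b, m] = {a, b, m} := by
      ext x
      simp
      tauto
    rw [hr] at this
    simpa using this
  · intro u hu
    obtain ⟨x, y, z, rfl⟩ := Submodule.mem_span_triple.1 hu
    simp only [map_add, map_smul, LinearMap.add_apply, LinearMap.smul_apply, smul_eq_mul,
      ha, hb, hm.2, hab, hba, ham, hma, hbm, hmb]
    nlinarith [sq_nonneg x, sq_nonneg y]
  · intro u hu
    constructor
    · intro h
      obtain ⟨x, y, z, rfl⟩ := Submodule.mem_span_triple.1 hu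
      have hx : x = 0 := by simpa [ha, hba, hma] using h a haU
      have hy : y = 0 := by simpa [hb, hab, hmb] using h b hbU
      rw [Submodule.mem_span_singleton]
      exact ⟨z, by simp [hx, hy]⟩
    · intro h v hv
      obtain ⟨k, rfl⟩ := Submodule.mem_span_singleton.1 h
      obtain ⟨x, y, z, rfl⟩ := Submodule.mem_span_triple.1 hv
      simp [hm.2, hma, hmb]
  · obtain ⟨e, he, hep, hem, hea, heb⟩ := exists_unit (a := a) (b := b) hp hm hmp
    have hpe : bform p e = 0 := by rw [bform_comm, hep]
    have hc₁ := contact_span (q := p + e) hm (by simp [hp, he, hpe, hep]) (by simp [hpm, hem])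
      hmp (by simp [hp, hep])
    have hc₂ := contact_span (q := p - e) hm (by simp [hp, he, hpe, hep]) (by simp [hpm, hem])
      hmp (by simp [hp, hep])
    refine ⟨Submodule.span ℝ {m, p + e}, Submodule.span ℝ {m, p - e}, ?_, hc₁, hc₂,
      Submodule.subset_span (by simp), Submodule.subset_span (by simp), ?_⟩
    -- `⟨p + e, p - e⟩ = -2`, so no totally isotropic subspace contains both
    · intro h
      have h1 : p + e ∈ Submodule.span ℝ ({m, p - e} : Set R42) :=
        h ▸ Submodule.subset_span (by simp)
      have := hc₂.2 _ h1 (p - e) (Submodule.subset_span (by simp))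
      simp [hp, he, hpe, hep] at this
    · ext v
      simp only [Set.mem_union, Set.mem_ofPred_eq, Set.mem_singleton_iff, SetLike.mem_coe]
      constructor
      · rintro (⟨hv, hvU⟩ | rfl)
        · obtain ⟨k, hk⟩ := orthogonal_decomp ha hb hba hp hm hmp hma hmb hpa hpb he hep hem hea
            heb (hvU a haU) (hvU b hbU) (hvU m hmU)
          have hsq : bform v e ^ 2 = bform v p ^ 2 := by
            have h1 := congrArg (fun x => bform v x) hk
            simp [hv.2, hvU m hmU] at h1
            nlinarith
          rcases sq_eq_sq_iff_eq_or_eq_neg.1 hsq with h | h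
          · right
            rw [Submodule.mem_span_pair]
            refine ⟨k, -bform v p, ?_⟩
            rw [h] at hk
            conv_rhs => rw [hk]
            module
          · left
            rw [Submodule.mem_span_pair]
            refine ⟨k, -bform v p, ?_⟩
            rw [h] at hk
            conv_rhs => rw [hk]
            module
        · left
          exact zero_mem _
      · intro h
        by_cases hv0 : v = 0
        · exact Or.inr hv0
        left
        refine ⟨⟨hv0, ?_⟩, ?_⟩
        · rcases h with h | h
          · exact hc₁.2 v h v h
          · exact hc₂.2 v h v h
        · intro u hu
          obtain ⟨x, y, z, rfl⟩ := Submodule.mem_span_triple.1 hu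
          rcases h with h | h
          all_goals
            obtain ⟨r, s, rfl⟩ := Submodule.mem_span_pair.1 h
            simp [hm.2, hma, hmb, hpa, hpb, hpm, hea, heb, hem]
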